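/- Let q be a power of an odd prime. Let A, B₁, B₂, C be multiplicative characters of 𝔽_q^× with A ≠ ε, B₁B₂ ≠ ε, A ≠ C, and B₁B₂ ≠ C. Then for any λ ∈ 𝔽_q, 𝔽_D^{(2)}[A; B₁, B₂; C; λ, λ] = (C·(AB₁B₂)⁻¹)(1−λ) · ₂𝔽₁[C·Ā, C·(B₁B₂)⁻¹; C; λ] + δ(1−λ) · J(A, (AB₁B₂)⁻¹·C) / J(A, CĀ). -/

import Mathlib

open Finset

/-- Jacobi sum `J(A,B) = Σ_x A(x) B(1-x)`. -/
noncomputable def jacobiSum' {F : Type} [Field F] [Fintype F] (A B : MulChar F ℂ) : ℂ :=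
  ∑ x : F, A x * B (1 - x)

/-- One-variable finite-field period function `ℙ_D^{(1)}[A; B; C; λ]`. -/
noncomputable def P1 {F : Type} [Field F] [Fintype F] (A B C : MulChar F ℂ) (l : F) : ℂ :=
  ∑ y : F, A y * (C * A⁻¹) (1 - y) * B⁻¹ (1 - l * y)

/-- Two-variable finite-field Appell–Lauricella period function `ℙ_D^{(2)}`. -/
noncomputable def P2 {F : Type} [Field F] [Fintype F] (A B₁ B₂ C : MulChar F ℂ) (l₁ l₂ : F) : ℂ :=
  ∑ y : F, A y * (C * A⁻¹) (1 - y) * B₁⁻¹ (1 - l₁ * y) * B₂⁻¹ (1 - l₂ * y)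

/-- n-variable finite-field Appell–Lauricella period function `ℙ_D^{(n)}`. -/
noncomputable def PDn {F : Type} [Field F] [Fintype F] (n : ℕ) (A : MulChar F ℂ)
    (B : Fin n → MulChar F ℂ) (C : MulChar F ℂ) (l : Fin n → F) : ℂ :=
  ∑ y : F, A y * (C * A⁻¹) (1 - y) * ∏ i, (B i)⁻¹ (1 - l i * y)

/-- Normalized two-variable Appell–Lauricella function `𝔽_D^{(2)}`. -/
noncomputable def F2 {F : Type} [Field F] [Fintype F] (A B₁ B₂ C : MulChar F ℂ) (l₁ l₂ : F) : ℂ :=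
  P2 A B₁ B₂ C l₁ l₂ / jacobiSum' A (C * A⁻¹)

/-- Normalized n-variable Appell–Lauricella function `𝔽_D^{(n)}`. -/
noncomputable def FDn {F : Type} [Field F] [Fintype F] (n : ℕ) (A : MulChar F ℂ)
    (B : Fin n → MulChar F ℂ) (C : MulChar F ℂ) (l : Fin n → F) : ℂ :=
  PDn n A B C l / jacobiSum' A (C * A⁻¹)

/-- Finite-field Gauss hypergeometric function `₂𝔽₁[A,B;C;λ] = ℙ_D^{(1)}[B;A;C;λ]/J(B,C B̄)`. -/
noncomputable def twoF1 {F : Type} [Field F] [Fintype F] (A B C : MulChar F ℂ) (l : F) : ℂ :=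
  P1 B A C l / jacobiSum' B (C * B⁻¹)

open scoped Classical in
/-- `δ(x) = 1` if `x = 0`, else `0`. -/
noncomputable def deltaC {F : Type} [Field F] [Fintype F] (x : F) : ℂ :=
  if x = 0 then 1 else 0

noncomputable instance {F : Type} [Field F] [Fintype F] : Fintype (MulChar F ℂ) :=
  Fintype.ofFinite _

/-- Character binomial coefficient `(A choose χ) = -χ(-1) J(A, χ̄)`. -/
noncomputable def charBinom {F : Type} [Field F] [Fintype F] (A χ : MulChar F ℂ) : ℂ :=
  -χ (-1) * jacobiSum' A χ⁻¹

/-!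
For `λ₁ = λ₂ = λ` the factors in `B₁` and `B₂` combine, so with `B = B₁B₂` the left-hand side is
`₂𝔽₁[B, A; C; λ]`. For `λ = 1` it degenerates to a quotient of Jacobi sums, and for `λ ≠ 1` the
claim is Euler's transformation of `₂𝔽₁`. As over `ℂ`, Euler's transformation follows from two Pfaff
transformations (the substitution `y ↦ 1 - y`) with an exchange of the two upper parameters in
between. The exchange comes from the double sum `∑ x, ∑ y, A(x) B(y) D(1 - x - y + λxy)` with
`D = C(AB)⁻¹`, which is symmetric under swapping `(A, x)` and `(B, y)`: summing over `y` first gives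
`J(B, D) ℙ[A; B; C; λ]`, and the case `λ = 0` compares the normalizing Jacobi sums.
-/

section MulChar

variable {F R : Type*} [Field F] [Fintype F]

lemma natCast_card_ne_zero_of_ringChar_ne [CommRing R] [IsDomain R]
    (h : ringChar R ≠ ringChar F) : (Fintype.card F : R) ≠ 0 := by
  obtain ⟨n, hp, hn⟩ := FiniteField.card F (ringChar F)
  rw [hn, Nat.cast_pow]
  refine pow_ne_zero _ fun hzero => ?_
  exact ((Nat.dvd_prime hp).mp (ringChar.dvd hzero)).elim CharP.ringChar_ne_one h

lemma jacobiSum_ne_zero [Field R] (h : ringChar R ≠ ringChar F) {χ φ : MulChar F R}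
    (hχ : χ ≠ 1) (hχφ : χ * φ ≠ 1) : jacobiSum χ φ ≠ 0 := by
  rcases eq_or_ne φ 1 with rfl | hφ
  · rw [jacobiSum_comm, jacobiSum_one_nontrivial hχ]
    exact neg_ne_zero.mpr one_ne_zero
  · refine left_ne_zero_of_mul (b := jacobiSum χ⁻¹ φ⁻¹) ?_
    rw [jacobiSum_mul_jacobiSum_inv h hχ hφ hχφ]
    exact natCast_card_ne_zero_of_ringChar_ne h

lemma sum_mulChar_mul_mulChar_sub_mul [CommRing R] [IsDomain R] {χ φ : MulChar F R}
    (hχ : χ ≠ 1) (hχφ : χ * φ ≠ 1) (u v : F) :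
    ∑ y, χ y * φ (u - v * y) = (χ * φ) u * χ⁻¹ v * jacobiSum χ φ := by
  rcases eq_or_ne v 0 with rfl | hv
  · simp [← Finset.sum_mul, MulChar.sum_eq_zero_of_ne_one hχ, MulChar.map_zero]
  rcases eq_or_ne u 0 with rfl | hu
  · calc ∑ y, χ y * φ (0 - v * y)
        = φ (-v) * ∑ y, (χ * φ) y := by
          rw [Finset.mul_sum]
          refine Finset.sum_congr rfl fun y _ => ?_
          rw [zero_sub, ← neg_mul, map_mul, MulChar.mul_apply]
          ring
      _ = (χ * φ) 0 * χ⁻¹ v * jacobiSum χ φ := by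
          rw [MulChar.sum_eq_zero_of_ne_one hχφ, MulChar.map_zero]
          ring
  · rw [jacobiSum, Finset.mul_sum,
      ← Equiv.sum_comp (Equiv.mulLeft₀ (u * v⁻¹) (mul_ne_zero hu (inv_ne_zero hv)))]
    refine Finset.sum_congr rfl fun y _ => ?_
    have hsub : u - v * (u * v⁻¹ * y) = u * (1 - y) := by field_simp
    rw [Equiv.mulLeft₀_apply, hsub, map_mul, map_mul, map_mul, MulChar.mul_apply,
      MulChar.inv_apply']
    ring

end MulChar

section Period

variable {F : Type} [Field F] [Fintype F]

lemma jacobiSum'_eq_jacobiSum (A B : MulChar F ℂ) : jacobiSum' A B = jacobiSum A B := rfl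

lemma twoF1_eq_P1_div_jacobiSum (A B C : MulChar F ℂ) (l : F) :
    twoF1 A B C l = P1 B A C l / jacobiSum B (C * B⁻¹) := rfl

lemma P1_zero (A B C : MulChar F ℂ) : P1 A B C 0 = jacobiSum A (C * A⁻¹) := by
  simp [P1, jacobiSum]

lemma P1_one (A B C : MulChar F ℂ) : P1 A B C 1 = jacobiSum A ((A * B)⁻¹ * C) := by
  refine Finset.sum_congr rfl fun y _ => ?_
  rw [one_mul, mul_assoc, ← MulChar.mul_apply, mul_inv, mul_comm _ C, mul_assoc]

lemma sum_sum_mulChar_eq_jacobiSum_mul_P1 {A B D : MulChar F ℂ} (hB : B ≠ 1) (hBD : B * D ≠ 1)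
    (l : F) :
    ∑ x, ∑ y, A x * B y * D (1 - x - y + l * x * y) = jacobiSum B D * P1 A B (A * B * D) l := by
  rw [P1, Finset.mul_sum]
  refine Finset.sum_congr rfl fun x _ => ?_
  calc ∑ y, A x * B y * D (1 - x - y + l * x * y)
      = A x * ∑ y, B y * D ((1 - x) - (1 - l * x) * y) := by
        rw [Finset.mul_sum]
        refine Finset.sum_congr rfl fun y _ => ?_
        rw [mul_assoc]
        congr 3
        ring
    _ = A x * ((B * D) (1 - x) * B⁻¹ (1 - l * x) * jacobiSum B D) := by
        rw [sum_mulChar_mul_mulChar_sub_mul hB hBD]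
    _ = jacobiSum B D * (A x * (A * B * D * A⁻¹) (1 - x) * B⁻¹ (1 - l * x)) := by
        rw [mul_assoc A, mul_inv_cancel_comm]
        ring

lemma jacobiSum_mul_P1_comm {A B D : MulChar F ℂ} (hA : A ≠ 1) (hB : B ≠ 1) (hAD : A * D ≠ 1)
    (hBD : B * D ≠ 1) (l : F) :
    jacobiSum B D * P1 A B (A * B * D) l = jacobiSum A D * P1 B A (A * B * D) l := by
  rw [← sum_sum_mulChar_eq_jacobiSum_mul_P1 hB hBD, mul_comm A B,
    ← sum_sum_mulChar_eq_jacobiSum_mul_P1 hA hAD, Finset.sum_comm]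
  refine Finset.sum_congr rfl fun y _ => Finset.sum_congr rfl fun x _ => ?_
  rw [mul_comm (A x)]
  congr 2
  ring

theorem twoF1_comm {A B C : MulChar F ℂ} (hA : A ≠ 1) (hB : B ≠ 1) (hAC : A ≠ C) (hBC : B ≠ C)
    (l : F) : twoF1 A B C l = twoF1 B A C l := by
  obtain ⟨D, rfl⟩ : ∃ D, C = A * B * D := ⟨(A * B)⁻¹ * C, (mul_inv_cancel_left _ _).symm⟩
  have hAD : A * D ≠ 1 := fun h => hBC (by rw [mul_right_comm, h, one_mul])
  have hBD : B * D ≠ 1 := fun h => hAC (by rw [mul_assoc, h, mul_one])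
  have hchar : ringChar ℂ ≠ ringChar F := by
    rw [ringChar.eq_zero]
    exact (CharP.ringChar_ne_zero_of_finite F).symm
  have hnorm := jacobiSum_mul_P1_comm hA hB hAD hBD (0 : F)
  rw [P1_zero, P1_zero] at hnorm
  calc twoF1 A B (A * B * D) l
      = jacobiSum A D * P1 B A (A * B * D) l /
          (jacobiSum A D * jacobiSum B (A * B * D * B⁻¹)) :=
        (mul_div_mul_left _ _ (jacobiSum_ne_zero hchar hA hAD)).symm
    _ = jacobiSum B D * P1 A B (A * B * D) l /
          (jacobiSum B D * jacobiSum A (A * B * D * A⁻¹)) := by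
        rw [hnorm, jacobiSum_mul_P1_comm hA hB hAD hBD]
    _ = twoF1 B A (A * B * D) l := mul_div_mul_left _ _ (jacobiSum_ne_zero hchar hB hBD)

lemma P1_pfaff (A B C : MulChar F ℂ) {l : F} (hl : 1 - l ≠ 0) :
    P1 A B C l = B⁻¹ (1 - l) * P1 (C * A⁻¹) B C (-l / (1 - l)) := by
  rw [P1, P1, Finset.mul_sum, ← Equiv.sum_comp (Equiv.subLeft (1 : F))]
  refine Finset.sum_congr rfl fun y _ => ?_
  have hfactor : 1 - l * (1 - y) = (1 - l) * (1 - -l / (1 - l) * y) := by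
    field_simp
    ring
  have hCA : C * (C * A⁻¹)⁻¹ = A := by rw [mul_inv_rev, inv_inv, mul_inv_cancel_comm_assoc]
  rw [Equiv.subLeft_apply, hfactor, map_mul, sub_sub_cancel, hCA]
  ring

lemma twoF1_pfaff (A B C : MulChar F ℂ) {l : F} (hl : 1 - l ≠ 0) :
    twoF1 A B C l = A⁻¹ (1 - l) * twoF1 A (C * B⁻¹) C (-l / (1 - l)) := by
  have hCB : C * (C * B⁻¹)⁻¹ = B := by rw [mul_inv_rev, inv_inv, mul_inv_cancel_comm_assoc]
  rw [twoF1_eq_P1_div_jacobiSum, twoF1_eq_P1_div_jacobiSum, P1_pfaff B A C hl, hCB,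
    jacobiSum_comm, mul_div_assoc]

theorem twoF1_euler {A B C : MulChar F ℂ} (hA : A ≠ 1) (hB : B ≠ 1) (hAC : A ≠ C) (hBC : B ≠ C)
    {l : F} (hl : 1 - l ≠ 0) :
    twoF1 A B C l = (C * (A * B)⁻¹) (1 - l) * twoF1 (C * B⁻¹) (C * A⁻¹) C l := by
  set m := -l / (1 - l) with hm
  have hm_sub : 1 - m = (1 - l)⁻¹ := by
    rw [hm]
    field_simp
    ring
  have hm_ne : 1 - m ≠ 0 := hm_sub ▸ inv_ne_zero hl
  have hm_pfaff : -m / (1 - m) = l := by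
    rw [hm_sub, hm]
    field_simp
  have hCB : C * B⁻¹ ≠ 1 := by rwa [Ne, mul_inv_eq_one, eq_comm]
  have hCBC : C * B⁻¹ ≠ C := by rwa [Ne, mul_eq_left, inv_eq_one]
  calc twoF1 A B C l
      = A⁻¹ (1 - l) * twoF1 A (C * B⁻¹) C m := twoF1_pfaff A B C hl
    _ = A⁻¹ (1 - l) * twoF1 (C * B⁻¹) A C m := by rw [twoF1_comm hA hCB hAC hCBC]
    _ = A⁻¹ (1 - l) * ((C * B⁻¹)⁻¹ (1 - m) * twoF1 (C * B⁻¹) (C * A⁻¹) C l) := by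
      rw [twoF1_pfaff (C * B⁻¹) A C hm_ne, hm_pfaff]
    _ = (C * (A * B)⁻¹) (1 - l) * twoF1 (C * B⁻¹) (C * A⁻¹) C l := by
      rw [hm_sub, ← MulChar.inv_apply', inv_inv, ← mul_assoc, ← MulChar.mul_apply, mul_inv,
        mul_left_comm]

lemma twoF1_one (A B C : MulChar F ℂ) :
    twoF1 A B C 1 = jacobiSum B ((B * A)⁻¹ * C) / jacobiSum B (C * B⁻¹) := by
  rw [twoF1_eq_P1_div_jacobiSum, P1_one]

lemma F2_self (A B₁ B₂ C : MulChar F ℂ) (l : F) : F2 A B₁ B₂ C l l = twoF1 (B₁ * B₂) A C l := by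
  simp only [F2, twoF1, P2, P1, mul_inv B₁, MulChar.mul_apply B₁⁻¹, mul_assoc]

end Period

theorem statement_13_general (F : Type) [Field F] [Fintype F]
    (A B₁ B₂ C : MulChar F ℂ) (hA : A ≠ 1) (hB : B₁ * B₂ ≠ 1)
    (hAC : A ≠ C) (hBC : B₁ * B₂ ≠ C) (l : F) :
    F2 A B₁ B₂ C l l =
      (C * (A * B₁ * B₂)⁻¹) (1 - l) * twoF1 (C * A⁻¹) (C * (B₁ * B₂)⁻¹) C l +
        deltaC (1 - l) * jacobiSum' A ((A * B₁ * B₂)⁻¹ * C) / jacobiSum' A (C * A⁻¹) := by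
  rw [F2_self, mul_assoc A]
  rcases eq_or_ne (1 - l) 0 with hl | hl
  · obtain rfl : 1 = l := sub_eq_zero.mp hl
    simp [twoF1_one, jacobiSum'_eq_jacobiSum, deltaC, MulChar.map_zero]
  · rw [twoF1_euler hB hA hBC hAC hl, mul_comm (B₁ * B₂) A]
    simp [deltaC, hl]

/-- reduction formula for `𝔽_D^{(2)}` when `λ₁ = λ₂`. -/
theorem statement_13 (F : Type) [Field F] [Fintype F] (hq : Odd (Fintype.card F))
    (A B₁ B₂ C : MulChar F ℂ) (hA : A ≠ 1) (hB : B₁ * B₂ ≠ 1)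
    (hAC : A ≠ C) (hBC : B₁ * B₂ ≠ C) (l : F) :
    F2 A B₁ B₂ C l l =
      (C * (A * B₁ * B₂)⁻¹) (1 - l) * twoF1 (C * A⁻¹) (C * (B₁ * B₂)⁻¹) C l +
        deltaC (1 - l) * jacobiSum' A ((A * B₁ * B₂)⁻¹ * C) / jacobiSum' A (C * A⁻¹) :=
  statement_13_general F A B₁ B₂ C hA hB hAC hBC l
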